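/- Let A be the 4-by-4 reciprocal matrix with rows (1, 1, 9, 4), (1, 1, 1, 4), (1/9, 1, 1, 1), (1/4, 1/4, 1, 1). Then the vectors w = (4.1, 4.1, 1, 1) and v = (4.2, 4, 3, 1) are both efficient for A, but their Hadamard geometric mean, the vector with i-th entry (w_i·v_i)^{1/2}, is not efficient for A. In particular, for n > 3 the set of efficient vectors of a reciprocal matrix need not be closed under the Hadamard geometric mean. -/

import Mathlib

/-- A positive vector `w` is efficient for a reciprocal matrix `A` if every positive
vector `v` with `|v i / v j - A i j| ≤ |w i / w j - A i j|` entrywise is a positive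
scalar multiple of `w`. -/
def Efficient {n : ℕ} (A : Matrix (Fin n) (Fin n) ℝ) (w : Fin n → ℝ) : Prop :=
  ∀ v : Fin n → ℝ, (∀ i, 0 < v i) →
    (∀ i j, |v i / v j - A i j| ≤ |w i / w j - A i j|) →
    ∃ c : ℝ, 0 < c ∧ v = fun i => c * w i

/-!
Efficiency of a positive vector `w` is strong connectedness of the digraph with an arc `i → j`
whenever `A i j ≤ w i / w j` (Blanquero, Carrizosa and Conde). If `v` approximates `A` at least as
well as `w`, then `v i / w i ≤ v j / w j` along every arc, so strong connectedness makes `v / w`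
constant. Conversely, if no arc leaves a proper nonempty set `S`, then scaling `w` up slightly on
`S` improves every ratio between `S` and its complement.

Both vectors of the example have a Hamiltonian cycle in their digraph, whereas in the digraph of
their geometric mean no arc leads from the last vertex to another one.
-/

open Filter Relation Set Topology

section EfficiencyDigraph

variable {n : ℕ} {A : Matrix (Fin n) (Fin n) ℝ} {w : Fin n → ℝ}

/-- The arcs `i → j` of the digraph `G(A, w)` whose strong connectedness, expressed through
`Relation.ReflTransGen`, characterizes efficiency. Loops are harmless and are not excluded. -/
def EfficiencyArc (A : Matrix (Fin n) (Fin n) ℝ) (w : Fin n → ℝ) (i j : Fin n) : Prop :=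
  A i j ≤ w i / w j

theorem EfficiencyArc.div_le_div {v : Fin n → ℝ} {i j : Fin n} (hij : EfficiencyArc A w i j)
    (hwi : 0 < w i) (hwj : 0 < w j) (hvj : 0 < v j)
    (hvw : |v i / v j - A i j| ≤ |w i / w j - A i j|) : v i / w i ≤ v j / w j := by
  have hratio : v i / v j ≤ w i / w j := by
    rw [abs_of_nonneg (sub_nonneg.2 hij)] at hvw
    linarith [le_of_abs_le hvw]
  rw [div_le_div_iff₀ hvj hwj] at hratio
  rw [div_le_div_iff₀ hwi hwj]
  linarith

theorem efficient_of_forall_reflTransGen (hw : ∀ i, 0 < w i)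
    (hconn : ∀ i j, ReflTransGen (EfficiencyArc A w) i j) : Efficient A w := by
  intro v hv hvw
  have hmono (i j : Fin n) : v i / w i ≤ v j / w j := by
    induction hconn i j with
    | refl => exact le_rfl
    | tail _ hpq ih => exact ih.trans (hpq.div_le_div (hw _) (hw _) (hv _) (hvw _ _))
  rcases isEmpty_or_nonempty (Fin n) with _ | ⟨⟨i⟩⟩
  · exact ⟨1, one_pos, Subsingleton.elim _ _⟩
  · refine ⟨v i / w i, div_pos (hv i) (hw i), funext fun j => ?_⟩
    rw [(hmono i j).antisymm (hmono j i), div_mul_cancel₀ _ (hw j).ne']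

theorem efficient_of_isChain (hw : ∀ i, 0 < w i) {i₀ : Fin n} {l : List (Fin n)}
    (hchain : (i₀ :: l ++ [i₀]).IsChain (EfficiencyArc A w)) (hspan : ∀ i, i ∈ i₀ :: l) :
    Efficient A w := by
  have hpair : (i₀ :: l ++ [i₀]).Pairwise (ReflTransGen (EfficiencyArc A w)) :=
    (hchain.imp fun _ _ => ReflTransGen.single).pairwise
  have hto (i : Fin n) : ReflTransGen (EfficiencyArc A w) i i₀ :=
    (List.pairwise_append.1 hpair).2.2 i (hspan i) i₀ (List.mem_singleton_self i₀)
  have hfrom (j : Fin n) : ReflTransGen (EfficiencyArc A w) i₀ j := by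
    obtain rfl | hj := List.mem_cons.1 (hspan j)
    · exact .refl
    · exact List.rel_of_pairwise_cons hpair (List.mem_append_left _ hj)
  exact efficient_of_forall_reflTransGen hw fun i j => (hto i).trans (hfrom j)

theorem piecewise_smul_div_mem_uIcc (hA : ∀ i j, A j i = (A i j)⁻¹) (hw : ∀ i, 0 < w i)
    {S : Set (Fin n)} [DecidablePred (· ∈ S)] {t : ℝ} (ht : 1 < t)
    (hcut : ∀ p ∈ S, ∀ q ∉ S, t * w p / w q ≤ A p q) (p q : Fin n) :
    S.piecewise (t • w) w p / S.piecewise (t • w) w q ∈ uIcc (A p q) (w p / w q) := by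
  have ht₀ : 0 < t := one_pos.trans ht
  have hgrow (k l : Fin n) : w k / w l ≤ t * w k / w l :=
    div_le_div_of_nonneg_right (le_mul_of_one_le_left (hw k).le ht.le) (hw l).le
  by_cases hp : p ∈ S <;> by_cases hq : q ∈ S <;>
    simp only [hp, hq, not_false_eq_true, piecewise_eq_of_mem, piecewise_eq_of_notMem,
      Pi.smul_apply, smul_eq_mul]
  · rw [mul_div_mul_left _ _ ht₀.ne']
    exact right_mem_uIcc
  · exact mem_uIcc_of_ge (hgrow p q) (hcut p hp q hq)
  · have hpos : 0 < t * w q / w p := div_pos (mul_pos ht₀ (hw q)) (hw p)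
    refine mem_uIcc_of_le ?_ ?_
    · rw [hA q p, ← inv_div]
      exact inv_anti₀ hpos (hcut q hq p hp)
    · rw [← inv_div, ← inv_div (w q)]
      exact inv_anti₀ (div_pos (hw q) (hw p)) (hgrow q p)
  · exact right_mem_uIcc

theorem exists_one_lt_forall_mul_div_le {S : Set (Fin n)}
    (hcut : ∀ p ∈ S, ∀ q ∉ S, w p / w q < A p q) :
    ∃ t : ℝ, 1 < t ∧ ∀ p ∈ S, ∀ q ∉ S, t * w p / w q ≤ A p q := by
  have hnear : ∀ᶠ t in 𝓝[>] (1 : ℝ), ∀ p ∈ S, ∀ q ∉ S, t * w p / w q ≤ A p q := by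
    simp only [eventually_all]
    intro p hp q hq
    have hlim : Tendsto (fun t : ℝ => t * w p / w q) (𝓝 1) (𝓝 (w p / w q)) :=
      Continuous.tendsto' (by fun_prop) _ _ (by rw [one_mul])
    exact (hlim.mono_left nhdsWithin_le_nhds).eventually_le_const (hcut p hp q hq)
  exact (eventually_mem_nhdsWithin.and hnear).exists

theorem Efficient.exists_efficiencyArc (h : Efficient A w) (hA : ∀ i j, A j i = (A i j)⁻¹)
    (hw : ∀ i, 0 < w i) {S : Set (Fin n)} (hS : S.Nonempty) (hSc : Sᶜ.Nonempty) :
    ∃ p ∈ S, ∃ q ∉ S, EfficiencyArc A w p q := by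
  classical
  by_contra! hcut
  simp only [EfficiencyArc, not_le] at hcut
  obtain ⟨t, ht, hle⟩ := exists_one_lt_forall_mul_div_le hcut
  have hpos : ∀ i, 0 < S.piecewise (t • w) w i := fun i => by
    by_cases hi : i ∈ S
    · simpa [hi] using mul_pos (one_pos.trans ht) (hw i)
    · simpa [hi] using hw i
  obtain ⟨c, -, hc⟩ := h _ hpos fun p q =>
    abs_sub_left_of_mem_uIcc (piecewise_smul_div_mem_uIcc hA hw ht hle p q)
  obtain ⟨i, hi⟩ := hS
  obtain ⟨j, hj⟩ := hSc
  have hct : t = c := mul_right_cancel₀ (hw i).ne' (by simpa [hi] using congrFun hc i)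
  have hc₁ : 1 = c :=
    mul_right_cancel₀ (hw j).ne' (by simpa [notMem_of_mem_compl hj] using congrFun hc j)
  exact ht.ne (hc₁.trans hct.symm)

theorem efficiencyArc_hadamardGeomMean_iff {v : Fin n → ℝ} {i j : Fin n} (hi : 0 ≤ w i * v i)
    (hj : 0 ≤ w j * v j) (hA : 0 < A i j) :
    EfficiencyArc A (fun k => (w k * v k) ^ ((1 : ℝ) / 2)) i j ↔
      A i j ^ 2 ≤ w i * v i / (w j * v j) := by
  rw [EfficiencyArc, ← Real.div_rpow hi hj, ← Real.sqrt_eq_rpow, Real.le_sqrt' hA]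

theorem not_efficient_hadamardGeomMean [Nontrivial (Fin n)] {v : Fin n → ℝ}
    (hA : ∀ i j, A j i = (A i j)⁻¹) (hw : ∀ i, 0 < w i) (hv : ∀ i, 0 < v i) {i : Fin n}
    (hpos : ∀ j ≠ i, 0 < A i j) (hlt : ∀ j ≠ i, w i * v i / (w j * v j) < A i j ^ 2) :
    ¬ Efficient A (fun k => (w k * v k) ^ ((1 : ℝ) / 2)) := by
  intro h
  have hwv (k : Fin n) : 0 < w k * v k := mul_pos (hw k) (hv k)
  obtain ⟨_, rfl, j, hj, harc⟩ := h.exists_efficiencyArc hA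
    (fun k => Real.rpow_pos_of_pos (hwv k) _) (singleton_nonempty i) (exists_ne i)
  exact (hlt j hj).not_ge
    ((efficiencyArc_hadamardGeomMean_iff (hwv _).le (hwv j).le (hpos j hj)).1 harc)

end EfficiencyDigraph

/-- For the given 4-by-4 reciprocal matrix, `w = (4.1, 4.1, 1, 1)` and
`v = (4.2, 4, 3, 1)` are efficient but their Hadamard geometric mean is not:
the set of efficient vectors need not be closed under the geometric mean. -/
theorem stmt_14 (A : Matrix (Fin 4) (Fin 4) ℝ)
    (hA : A = Matrix.of
      ![![1, 1, 9, 4], ![1, 1, 1, 4], ![1 / 9, 1, 1, 1], ![1 / 4, 1 / 4, 1, 1]])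
    (w v : Fin 4 → ℝ)
    (hw : w = ![4.1, 4.1, 1, 1]) (hv : v = ![4.2, 4, 3, 1]) :
    Efficient A w ∧ Efficient A v ∧
      ¬ Efficient A (fun i => (w i * v i) ^ ((1 : ℝ) / 2)) := by
  have hrec : ∀ i j, A j i = (A i j)⁻¹ := by
    intro i j; fin_cases i <;> fin_cases j <;> norm_num [hA]
  have hw₀ : ∀ i, 0 < w i := by intro i; fin_cases i <;> norm_num [hw]
  have hv₀ : ∀ i, 0 < v i := by intro i; fin_cases i <;> norm_num [hv]
  refine ⟨efficient_of_isChain (i₀ := 0) (l := [1, 3, 2]) hw₀ ?_ (by decide),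
    efficient_of_isChain (i₀ := 0) (l := [3, 1, 2]) hv₀ ?_ (by decide),
    not_efficient_hadamardGeomMean (i := 3) hrec hw₀ hv₀ (fun j _ => ?_) fun j hj => ?_⟩
  · simp only [List.cons_append, List.nil_append, List.isChain_cons_cons, List.isChain_singleton,
      EfficiencyArc, hA, hw, Matrix.of_apply, Matrix.cons_val]
    norm_num
  · simp only [List.cons_append, List.nil_append, List.isChain_cons_cons, List.isChain_singleton,
      EfficiencyArc, hA, hv, Matrix.of_apply, Matrix.cons_val]
    norm_num
  · fin_cases j <;> simp [hA]
  · simp only [hA, hw, hv, Matrix.of_apply, Matrix.cons_val]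
    fin_cases j
    all_goals first | exact absurd rfl hj | norm_num
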